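/- Let t₁ ≥ 4 and t₂ ≥ 4 be integers, let p₁ < p₂ < ⋯ < p_{t₁} and q₁ < q₂ < ⋯ < q_{t₂} be primes with all the p_i distinct from all the q_j, and set n = p₁²p₂²⋯p_{t₁}² · q₁³q₂³⋯q_{t₂}³ and d = p₁²⋯p_{⌊t₁/4⌋}² · q₁³⋯q_{⌊t₂/4⌋}³. Then d divides n, d^4 ≤ n, and τ(d)^6 = 3^{6⌊t₁/4⌋}·4^{6⌊t₂/4⌋} ≥ 3^{t₁-1}·4^{t₂-1} = τ(n)/12; in particular τ(n) ≤ 12·τ(d)^6. -/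

import Mathlib

theorem aux_pow (f : ℕ → ℕ) (t : ℕ) (hm : ∀ i j, 1 ≤ i → i ≤ j → j ≤ t → f i ≤ f j) (k : ℕ) :
    4 * k ≤ t → (∏ i ∈ Finset.Icc 1 k, f i) ^ 4 ≤ ∏ i ∈ Finset.Icc 1 (4 * k), f i := by
  induction k with
  | zero => intro _; simp
  | succ k ih =>
    intro h
    have e : 4 * (k + 1) = 4 * k + 1 + 1 + 1 + 1 := by ring
    rw [e, Finset.prod_Icc_succ_top (by omega), Finset.prod_Icc_succ_top (by omega),
      Finset.prod_Icc_succ_top (by omega), Finset.prod_Icc_succ_top (by omega),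
      Finset.prod_Icc_succ_top (by omega), mul_pow]
    have h0 := ih (by omega)
    have h1 := hm (k + 1) (4 * k + 1) (by omega) (by omega) (by omega)
    have h2 := hm (k + 1) (4 * k + 1 + 1) (by omega) (by omega) (by omega)
    have h3 := hm (k + 1) (4 * k + 1 + 1 + 1) (by omega) (by omega) (by omega)
    have h4 := hm (k + 1) (4 * k + 1 + 1 + 1 + 1) (by omega) (by omega) (by omega)
    calc _ = (∏ i ∈ Finset.Icc 1 k, f i) ^ 4 * f (k + 1) * f (k + 1) * f (k + 1) * f (k + 1) := by
          ring
      _ ≤ _ := by gcongr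

theorem aux_le (p : ℕ → ℕ) (a t : ℕ) (hp : ∀ i ∈ Finset.Icc 1 t, (p i).Prime)
    (hm : ∀ i j, 1 ≤ i → i < j → j ≤ t → p i < p j) :
    (∏ i ∈ Finset.Icc 1 (t / 4), p i ^ a) ^ 4 ≤ ∏ i ∈ Finset.Icc 1 t, p i ^ a := by
  refine (aux_pow (fun i => p i ^ a) t ?_ (t / 4) (by omega)).trans ?_
  · intro i j h1 h2 h3
    rcases h2.eq_or_lt with rfl | h
    · exact le_rfl
    · exact Nat.pow_le_pow_left (hm i j h1 h h3).le a
  · apply Finset.prod_le_prod_of_subset_of_one_le'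
    · exact Finset.Icc_subset_Icc_right (by omega)
    · intro i hi _
      exact Nat.one_le_pow _ _ (hp i hi).pos

theorem aux_card (p : ℕ → ℕ) (a t : ℕ) (hp : ∀ i ∈ Finset.Icc 1 t, (p i).Prime)
    (hm : ∀ i j, 1 ≤ i → i < j → j ≤ t → p i < p j) (k : ℕ) :
    k ≤ t → (∏ i ∈ Finset.Icc 1 k, p i ^ a).divisors.card = (a + 1) ^ k := by
  induction k with
  | zero => intro _; simp
  | succ k ih =>
    intro h
    have hk : (p (k + 1)).Prime := hp _ (Finset.mem_Icc.2 ⟨by omega, h⟩)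
    rw [Finset.prod_Icc_succ_top (by omega), Nat.Coprime.card_divisors_mul, ih (by omega),
      Nat.divisors_prime_pow hk, Finset.card_map, Finset.card_range, pow_succ]
    apply Nat.Coprime.prod_left
    intro i hi
    rw [Finset.mem_Icc] at hi
    apply Nat.Coprime.pow
    rw [Nat.coprime_primes (hp i (Finset.mem_Icc.2 ⟨hi.1, by omega⟩)) hk]
    exact (hm i (k + 1) hi.1 (by omega) h).ne


theorem mixed_case_limitation (t₁ t₂ : ℕ) (ht₁ : 4 ≤ t₁) (ht₂ : 4 ≤ t₂)
    (p q : ℕ → ℕ)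
    (hp : ∀ i ∈ Finset.Icc 1 t₁, (p i).Prime)
    (hq : ∀ j ∈ Finset.Icc 1 t₂, (q j).Prime)
    (hpmono : ∀ i j, 1 ≤ i → i < j → j ≤ t₁ → p i < p j)
    (hqmono : ∀ i j, 1 ≤ i → i < j → j ≤ t₂ → q i < q j)
    (hpq : ∀ i ∈ Finset.Icc 1 t₁, ∀ j ∈ Finset.Icc 1 t₂, p i ≠ q j)
    (n d : ℕ)
    (hn : n = (∏ i ∈ Finset.Icc 1 t₁, p i ^ 2) * ∏ j ∈ Finset.Icc 1 t₂, q j ^ 3)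
    (hd : d = (∏ i ∈ Finset.Icc 1 (t₁ / 4), p i ^ 2) *
      ∏ j ∈ Finset.Icc 1 (t₂ / 4), q j ^ 3) :
    d ∣ n ∧ d ^ 4 ≤ n ∧
    d.divisors.card ^ 6 = 3 ^ (6 * (t₁ / 4)) * 4 ^ (6 * (t₂ / 4)) ∧
    3 ^ (t₁ - 1) * 4 ^ (t₂ - 1) ≤ 3 ^ (6 * (t₁ / 4)) * 4 ^ (6 * (t₂ / 4)) ∧
    12 * (3 ^ (t₁ - 1) * 4 ^ (t₂ - 1)) = n.divisors.card ∧
    n.divisors.card ≤ 12 * d.divisors.card ^ 6 := by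
  have hcop : ∀ k l, k ≤ t₁ → l ≤ t₂ → Nat.Coprime (∏ i ∈ Finset.Icc 1 k, p i ^ 2)
      (∏ j ∈ Finset.Icc 1 l, q j ^ 3) := by
    intro k l hk hl
    apply Nat.Coprime.prod_left
    intro i hi
    apply Nat.Coprime.prod_right
    intro j hj
    have hi' := Finset.Icc_subset_Icc_right hk hi
    have hj' := Finset.Icc_subset_Icc_right hl hj
    apply Nat.Coprime.pow
    rw [Nat.coprime_primes (hp i hi') (hq j hj')]
    exact hpq i hi' j hj'
  have hcard : ∀ k l, k ≤ t₁ → l ≤ t₂ → ((∏ i ∈ Finset.Icc 1 k, p i ^ 2) *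
      (∏ j ∈ Finset.Icc 1 l, q j ^ 3)).divisors.card = 3 ^ k * 4 ^ l := by
    intro k l hk hl
    rw [Nat.Coprime.card_divisors_mul (hcop k l hk hl), aux_card p 2 t₁ hp hpmono k hk,
      aux_card q 3 t₂ hq hqmono l hl]
  have hcn : n.divisors.card = 3 ^ t₁ * 4 ^ t₂ := by rw [hn]; exact hcard _ _ le_rfl le_rfl
  have hcd : d.divisors.card = 3 ^ (t₁ / 4) * 4 ^ (t₂ / 4) := by
    rw [hd]; exact hcard _ _ (by omega) (by omega)
  have c3 : d.divisors.card ^ 6 = 3 ^ (6 * (t₁ / 4)) * 4 ^ (6 * (t₂ / 4)) := by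
    rw [hcd, mul_pow, ← pow_mul, ← pow_mul, mul_comm 6, mul_comm 6]
  have c4 : 3 ^ (t₁ - 1) * 4 ^ (t₂ - 1) ≤ 3 ^ (6 * (t₁ / 4)) * 4 ^ (6 * (t₂ / 4)) :=
    Nat.mul_le_mul (Nat.pow_le_pow_right (by norm_num) (by omega))
      (Nat.pow_le_pow_right (by norm_num) (by omega))
  have c5 : 12 * (3 ^ (t₁ - 1) * 4 ^ (t₂ - 1)) = n.divisors.card := by
    rw [hcn]
    obtain ⟨a, rfl⟩ : ∃ a, t₁ = a + 1 := ⟨t₁ - 1, by omega⟩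
    obtain ⟨b, rfl⟩ : ∃ b, t₂ = b + 1 := ⟨t₂ - 1, by omega⟩
    simp only [Nat.add_sub_cancel]
    ring
  refine ⟨?_, ?_, c3, c4, c5, ?_⟩
  · rw [hn, hd]
    exact Nat.mul_dvd_mul
      (Finset.prod_dvd_prod_of_subset _ _ _ (Finset.Icc_subset_Icc_right (by omega)))
      (Finset.prod_dvd_prod_of_subset _ _ _ (Finset.Icc_subset_Icc_right (by omega)))
  · rw [hn, hd, mul_pow]
    exact Nat.mul_le_mul (aux_le p 2 t₁ hp hpmono) (aux_le q 3 t₂ hq hqmono)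
  · rw [← c5, c3]
    exact Nat.mul_le_mul_left 12 c4
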